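/- arXiv:1907.13587 — 4 statements merged into one kernel-verified Lean document; each statement's English description precedes it below -/
import Mathlib

section
/- Let (μ_k)_{k≥1} be finite positive Borel measures on ℂ such that each μ_k is h_k-dissectible for some scale function h_k and the union of the closed supports of the μ_k is a bounded subset of ℂ. Then there exist constants c_k > 0 and a scale function h such that the measure Σ_k c_k·μ_k is finite and h-dissectible. -/
open MeasureTheory Filter Topology Metric Set Complex
open scoped ENNReal NNReal BigOperators

noncomputable section

/-- The half-open dyadic square of generation `k` at position `(m, n)`:
`[m·2⁻ᵏ, (m+1)·2⁻ᵏ) × [n·2⁻ᵏ, (n+1)·2⁻ᵏ)`, of side length `2⁻ᵏ`. -/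
def dyadicSquare (k m n : ℤ) : Set ℂ :=
  {z : ℂ | (m : ℝ) * 2 ^ (-k) ≤ z.re ∧ z.re < ((m : ℝ) + 1) * 2 ^ (-k) ∧
    (n : ℝ) * 2 ^ (-k) ≤ z.im ∧ z.im < ((n : ℝ) + 1) * 2 ^ (-k)}

/-- The interior `10Q°` of the square `10Q` concentric with the dyadic square `Q` of parameters
`k, m, n` and of ten times its side length. -/
def dilatedSquare (k m n : ℤ) : Set ℂ :=
  {z : ℂ | |z.re - ((m : ℝ) + 1 / 2) * 2 ^ (-k)| < 5 * 2 ^ (-k) ∧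
    |z.im - ((n : ℝ) + 1 / 2) * 2 ^ (-k)| < 5 * 2 ^ (-k)}

/-- A scale function: nondecreasing, positive on `(0,∞)`, tending to `∞`, with
`∫₀¹ t⁻² h(t) dt < ∞`. -/
structure IsScaleFunction (h : ℝ → ℝ) : Prop where
  nonneg : ∀ t, 0 ≤ t → 0 ≤ h t
  mono : ∀ ⦃s t : ℝ⦄, 0 ≤ s → s ≤ t → h s ≤ h t
  pos : ∀ t : ℝ, 0 < t → 0 < h t
  tendsto_atTop : Tendsto h atTop atTop
  integrable : IntegrableOn (fun t => h t / t ^ 2) (Ioc (0 : ℝ) 1)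

/-- The dyadic square of parameters `k, m, n` is heavy with respect to `ν` and the scale
function `h`: `ν(Q) > h(|Q|)`. -/
def IsHeavy (ν : Measure ℂ) (h : ℝ → ℝ) (k m n : ℤ) : Prop :=
  ENNReal.ofReal (h ((2 : ℝ) ^ (-k))) < ν (dyadicSquare k m n)

/-- The open set `G_s(ν) = ⋃ {10Q° : Q heavy dyadic square, |Q| ≤ s}`. -/
def Gset (ν : Measure ℂ) (h : ℝ → ℝ) (s : ℝ) : Set ℂ :=
  ⋃ (kmn : ℤ × ℤ × ℤ)
    (_ : IsHeavy ν h kmn.1 kmn.2.1 kmn.2.2 ∧ (2 : ℝ) ^ (-kmn.1) ≤ s),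
    dilatedSquare kmn.1 kmn.2.1 kmn.2.2

/-- The dyadic 1-Hausdorff content: infimum of `Σᵢ |Qᵢ|` over countable covers by dyadic
squares. -/
def dyadicContent (E : Set ℂ) : ℝ≥0∞ :=
  ⨅ (c : ℕ → ℤ × ℤ × ℤ) (_ : E ⊆ ⋃ i, dyadicSquare (c i).1 (c i).2.1 (c i).2.2),
    ∑' i, ENNReal.ofReal ((2 : ℝ) ^ (-(c i).1))

/-- `ν` is `h`-dissectible: the dyadic 1-Hausdorff content of `G_s(ν)` tends to `0`
as `s → 0⁺`. -/
def HDissectible (ν : Measure ℂ) (h : ℝ → ℝ) : Prop :=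
  Tendsto (fun s => dyadicContent (Gset ν h s)) (𝓝[>] (0 : ℝ)) (𝓝 0)

/-- `ν` is dissectible: `h`-dissectible for some scale function `h`. -/
def Dissectible (ν : Measure ℂ) : Prop :=
  ∃ h : ℝ → ℝ, IsScaleFunction h ∧ HDissectible ν h

/-- The closed support of a measure on `ℂ`. -/
def msupport (ν : Measure ℂ) : Set ℂ := {z : ℂ | ∀ r > 0, 0 < ν (ball z r)}

/-- The derived set (set of accumulation points) of a set. -/
def derivSet (S : Set ℂ) : Set ℂ := {z : ℂ | z ∈ closure (S \ {z})}

/-- The perturbation matrix `Ψ(λ) = I + (∫ conj(vᵢ) uⱼ (w-λ)⁻¹ dμ)ᵢⱼ`. -/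
def perturbMatrix (μ : Measure ℂ) {m : ℕ} (u v : Fin m → ℂ → ℂ) (lam : ℂ) :
    Matrix (Fin m) (Fin m) ℂ :=
  1 + Matrix.of fun i j => ∫ w, (starRingEnd ℂ) (v i w) * u j w * (w - lam)⁻¹ ∂μ

/-- The perturbation determinant `ψ = det Ψ`. -/
def perturbDet (μ : Measure ℂ) {m : ℕ} (u v : Fin m → ℂ → ℂ) (lam : ℂ) : ℂ :=
  (perturbMatrix μ u v lam).det

/-- The operator norm of a matrix, acting on the Euclidean space `ℂᵐ`. -/
def matOpNorm {m : ℕ} (M : Matrix (Fin m) (Fin m) ℂ) : ℝ :=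
  ‖Matrix.toEuclideanCLM (𝕜 := ℂ) M‖

open scoped Classical in
/-- `ψ̃(z) = ‖Ψ(z)⁻¹‖⁻¹` if `Ψ(z)` is invertible, and `0` otherwise. -/
def psiTilde (μ : Measure ℂ) {m : ℕ} (u v : Fin m → ℂ → ℂ) (z : ℂ) : ℝ :=
  if IsUnit (perturbMatrix μ u v z) then (matOpNorm (perturbMatrix μ u v z)⁻¹)⁻¹ else 0

/-- `T = N + Σⱼ uⱼ ⟨·, vⱼ⟩` on `L²(μ)`, where `N` is multiplication by the variable. -/
def IsPerturbedOp (μ : Measure ℂ) {m : ℕ} (u v : Fin m → ℂ → ℂ)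
    (T : Lp ℂ 2 μ →L[ℂ] Lp ℂ 2 μ) : Prop :=
  ∀ f : Lp ℂ 2 μ, (T f : ℂ → ℂ) =ᵐ[μ]
    fun z => z * f z + ∑ j, (∫ w, f w * (starRingEnd ℂ) (v j w) ∂μ) * u j z

/-- The spectrum of the restriction of `T` to an invariant subspace `p`. -/
def restrictedSpectrum {X : Type*} [NormedAddCommGroup X] [NormedSpace ℂ X]
    (T : X →L[ℂ] X) (p : Submodule ℂ X) (hp : ∀ x ∈ p, T x ∈ p) : Set ℂ :=
  spectrum ℂ ((T : X →ₗ[ℂ] X).restrict hp)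

/-- A Jordan curve: a homeomorphic image of the unit circle. -/
def IsJordanCurve (γ : Set ℂ) : Prop :=
  ∃ f : (sphere (0 : ℂ) 1) → ℂ, Continuous f ∧ Function.Injective f ∧ range f = γ

/-- A piecewise `C¹` smooth Jordan curve. -/
def IsPiecewiseC1JordanCurve (γ : Set ℂ) : Prop :=
  IsJordanCurve γ ∧
  ∃ f : ℝ → ℂ, Continuous f ∧ Function.Periodic f 1 ∧ InjOn f (Ico (0 : ℝ) 1) ∧
    f '' Ico (0 : ℝ) 1 = γ ∧
    ∃ (N : ℕ) (t : ℕ → ℝ), 0 < N ∧ t 0 = 0 ∧ t N = 1 ∧ (∀ i < N, t i < t (i + 1)) ∧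
      ∀ i < N, ContDiffOn ℝ 1 f (Icc (t i) (t (i + 1)))

/-- Relative boundary `∂(A; B)` of `A` inside `B` (for `A ⊆ B`): the frontier of `A` in the
subspace topology of `B`. -/
def relBoundary (A B : Set ℂ) : Set ℂ := B ∩ closure A ∩ closure (B \ A)

/-- Admissibility of a Jordan curve `γ` with respect to the measures `μ` (for the location
condition on `G_s(μ)`) and `ν` (for Carleson constants), and the scale function `h`. -/
def AdmissibleCurve (μ ν : Measure ℂ) (h : ℝ → ℝ) (γ : Set ℂ) : Prop :=
  IsPiecewiseC1JordanCurve γ ∧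
  ∀ z₀ ∉ γ, ∃ s > (0 : ℝ), ∃ Om : ℕ → Set ℂ,
    Monotone Om ∧ (⋃ n, Om n) = connectedComponentIn γᶜ z₀ ∧
    (∀ n, IsOpen (Om n) ∧ IsConnected (Om n) ∧ IsJordanCurve (frontier (Om n)) ∧
      μH[1] (frontier (Om n)) < ⊤) ∧
    γ ∩ Gset μ h s = ∅ ∧ (∀ n, frontier (Om n) ∩ Gset μ h s = ∅) ∧
    (∃ K : ℝ, ∀ (n : ℕ) (z : ℂ) (r : ℝ), 0 < r →
      μH[1] (frontier (Om n) ∩ ball z r) ≤ ENNReal.ofReal (K * r)) ∧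
    (∃ M : ℝ, ∀ n : ℕ, ∀ z ∈ frontier (Om n), ∀ r : ℝ, 0 < r →
      (ν (ball z r)).toReal ≤ M * r)

/-- An admissible Jordan domain. -/
def AdmissibleJordanDomain (μ ν : Measure ℂ) (h : ℝ → ℝ) (Ω : Set ℂ) : Prop :=
  IsOpen Ω ∧ IsConnected Ω ∧ Bornology.IsBounded Ω ∧ AdmissibleCurve μ ν h (frontier Ω)

/-- Bishop's property (β) for an operator on `L²(μ)`. -/
def HasBishopBeta (μ : Measure ℂ) (T : Lp ℂ 2 μ →L[ℂ] Lp ℂ 2 μ) : Prop :=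
  ∀ U : Set ℂ, IsOpen U → ∀ F : ℕ → ℂ → Lp ℂ 2 μ,
    (∀ n, DifferentiableOn ℂ (F n) U) →
    (∀ K : Set ℂ, K ⊆ U → IsCompact K →
      TendstoUniformlyOn (fun n lam => T (F n lam) - lam • F n lam) (fun _ => 0) atTop K) →
    ∀ K : Set ℂ, K ⊆ U → IsCompact K →
      TendstoUniformlyOn (fun n lam => F n lam) (fun _ => 0) atTop K

lemma dyadicContent_mono {E F : Set ℂ} (hEF : E ⊆ F) : dyadicContent E ≤ dyadicContent F :=
  le_iInf₂ fun c hc => iInf₂_le c (hEF.trans hc)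

lemma dyadicContent_iUnion_le (E : ℕ → Set ℂ) :
    dyadicContent (⋃ k, E k) ≤ ∑' k, dyadicContent (E k) := by
  refine ENNReal.le_of_forall_pos_le_add fun ε hε hfin => ?_
  obtain ⟨δ, hδ, hδε⟩ :=
    ENNReal.exists_pos_sum_of_countable' (ENNReal.coe_pos.2 hε).ne' ℕ
  have hcover : ∀ k, ∃ c : ℕ → ℤ × ℤ × ℤ,
      E k ⊆ ⋃ i, dyadicSquare (c i).1 (c i).2.1 (c i).2.2 ∧
      ∑' i, ENNReal.ofReal ((2 : ℝ) ^ (-(c i).1)) < dyadicContent (E k) + δ k := by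
    intro k
    have hlt : dyadicContent (E k) < dyadicContent (E k) + δ k :=
      ENNReal.lt_add_right (ENNReal.ne_top_of_tsum_ne_top hfin.ne k) (hδ k).ne'
    obtain ⟨c, hc⟩ := iInf_lt_iff.1 hlt
    obtain ⟨hsub, hsum⟩ := iInf_lt_iff.1 hc
    exact ⟨c, hsub, hsum⟩
  choose c hsub hsum using hcover
  calc dyadicContent (⋃ k, E k)
      ≤ ∑' j : ℕ, ENNReal.ofReal ((2 : ℝ) ^ (-(c j.unpair.1 j.unpair.2).1)) := by
        refine iInf₂_le (fun j : ℕ => c j.unpair.1 j.unpair.2) ?_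
        refine iUnion_subset fun k z hz => ?_
        obtain ⟨i, hi⟩ := mem_iUnion.1 (hsub k hz)
        exact mem_iUnion.2 ⟨Nat.pair k i, by simpa using hi⟩
    _ = ∑' p : ℕ × ℕ, ENNReal.ofReal ((2 : ℝ) ^ (-(c p.1 p.2).1)) :=
        Nat.pairEquiv.symm.tsum_eq fun p : ℕ × ℕ =>
          ENNReal.ofReal ((2 : ℝ) ^ (-(c p.1 p.2).1))
    _ = ∑' k, ∑' i, ENNReal.ofReal ((2 : ℝ) ^ (-(c k i).1)) :=
        ENNReal.tsum_prod (f := fun k i => ENNReal.ofReal ((2 : ℝ) ^ (-(c k i).1)))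
    _ ≤ ∑' k, (dyadicContent (E k) + δ k) := ENNReal.tsum_le_tsum fun k => (hsum k).le
    _ = ∑' k, dyadicContent (E k) + ∑' k, δ k := ENNReal.tsum_add
    _ ≤ ∑' k, dyadicContent (E k) + ε := by gcongr

lemma Gset_mono_right (ν : Measure ℂ) (h : ℝ → ℝ) {s t : ℝ} (hst : s ≤ t) :
    Gset ν h s ⊆ Gset ν h t :=
  iUnion_mono fun _ => iUnion_mono' fun H => ⟨⟨H.1, H.2.trans hst⟩, Subset.rfl⟩

/-- Adding a bounded step to a scale function gives a scale function. -/
lemma IsScaleFunction.add_step {h : ℝ → ℝ} (hh : IsScaleFunction h) {M s : ℝ} (hM : 0 ≤ M)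
    (hs : 0 < s) : IsScaleFunction fun t => h t + (Ioi s).indicator (fun _ => M) t := by
  have hstep : ∀ t, 0 ≤ (Ioi s).indicator (fun _ => M) t := fun t =>
    indicator_nonneg (fun _ _ => hM) t
  refine ⟨fun t ht => add_nonneg (hh.nonneg t ht) (hstep t), fun a b ha hab => ?_,
    fun t ht => add_pos_of_pos_of_nonneg (hh.pos t ht) (hstep t),
    tendsto_atTop_mono (fun t => le_add_of_nonneg_right (hstep t)) hh.tendsto_atTop, ?_⟩
  · refine add_le_add (hh.mono ha hab) ?_
    by_cases has : s < a
    · rw [indicator_of_mem (mem_Ioi.2 has), indicator_of_mem (mem_Ioi.2 (has.trans_le hab))]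
    · rw [indicator_of_notMem (by simpa using has)]
      exact hstep b
  · have hint : IntegrableOn (fun t => (Ioi s).indicator (fun _ => M) t / t ^ 2)
        (Ioc (0 : ℝ) 1) := by
      refine Measure.integrableOn_of_bounded (M := M / s ^ 2) (by simp) ?_ ?_
      · exact ((measurable_const.indicator measurableSet_Ioi).div
          (measurable_id.pow_const 2)).aestronglyMeasurable
      · refine Eventually.of_forall fun t => ?_
        by_cases hst : s < t
        · rw [indicator_of_mem (mem_Ioi.2 hst), Real.norm_of_nonneg (by positivity)]
          gcongr
        · rw [indicator_of_notMem (by simpa using hst)]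
          simp only [zero_div, norm_zero]
          positivity
    simp only [add_div]
    exact hh.integrable.add hint

/-- A sufficiently small positive combination of countably many scale functions is again a scale
function, and the coefficients can absorb any finite weights. -/
lemma exists_isScaleFunction_tsum {H : ℕ → ℝ → ℝ} (hH : ∀ k, IsScaleFunction (H k))
    {w : ℕ → ℝ≥0∞} (hw : ∀ k, w k ≠ ⊤) :
    ∃ c : ℕ → ℝ, (∀ k, 0 < c k) ∧ ∑' k, ENNReal.ofReal (c k) * w k < ⊤ ∧
      (∀ t, 0 ≤ t → Summable fun k => c k * H k t) ∧
      IsScaleFunction fun t => ∑' k, c k * H k t := by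
  set I : ℕ → ℝ≥0∞ := fun k => ∫⁻ t in Ioc (0 : ℝ) 1, ENNReal.ofReal (H k t / t ^ 2)
  have hI_ne : ∀ k, I k ≠ ⊤ := fun k => by
    have hle : I k ≤ ∫⁻ t in Ioc (0 : ℝ) 1, ‖H k t / t ^ 2‖ₑ :=
      lintegral_mono fun t => Real.ofReal_le_enorm _
    exact (hle.trans_lt (hH k).integrable.2).ne
  obtain ⟨δ, hδ, hsum⟩ := ENNReal.exists_pos_tsum_mul_lt_of_countable one_ne_zero
    (fun k => w k + ENNReal.ofReal (H k k) + I k) (fun k => by finiteness [hw k, hI_ne k])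
  have hbound : ∀ f : ℕ → ℝ≥0∞, (∀ k, f k ≤ w k + ENNReal.ofReal (H k k) + I k) →
      ∑' k, (δ k : ℝ≥0∞) * f k < ⊤ := fun f hf =>
    ((ENNReal.tsum_le_tsum fun k => by
      rw [mul_comm]; exact mul_le_mul_left (hf k) _).trans_lt hsum).trans ENNReal.one_lt_top
  have hnn : ∀ t, 0 ≤ t → ∀ k, 0 ≤ (δ k : ℝ) * H k t := fun t ht k =>
    mul_nonneg (δ k).coe_nonneg ((hH k).nonneg t ht)
  have hdiag : Summable fun k : ℕ => (δ k : ℝ) * H k k := by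
    have hlt := hbound (fun k => ENNReal.ofReal (H k k)) fun k =>
      le_add_self.trans le_self_add
    refine (ENNReal.summable_toReal hlt.ne).congr fun k => ?_
    simp [ENNReal.toReal_ofReal ((hH k).nonneg k k.cast_nonneg)]
  have hsummable : ∀ t, 0 ≤ t → Summable fun k => (δ k : ℝ) * H k t := fun t ht => by
    refine Summable.of_norm_bounded_eventually_nat hdiag ?_
    filter_upwards [eventually_ge_atTop ⌈t⌉₊] with k hk
    rw [Real.norm_of_nonneg (hnn t ht k)]
    exact mul_le_mul_of_nonneg_left ((hH k).mono ht (Nat.ceil_le.1 hk)) (δ k).coe_nonneg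
  have hzero_le : ∀ t, 0 ≤ t → (δ 0 : ℝ) * H 0 t ≤ ∑' k, (δ k : ℝ) * H k t := fun t ht =>
    (hsummable t ht).le_tsum 0 fun k _ => hnn t ht k
  have hmono : ∀ ⦃s t : ℝ⦄, 0 ≤ s → s ≤ t →
      ∑' k, (δ k : ℝ) * H k s ≤ ∑' k, (δ k : ℝ) * H k t := fun s t hs hst =>
    (hsummable s hs).tsum_le_tsum
      (fun k => mul_le_mul_of_nonneg_left ((hH k).mono hs hst) (δ k).coe_nonneg)
      (hsummable t (hs.trans hst))
  refine ⟨fun k => δ k, hδ, ?_, hsummable, fun t ht => tsum_nonneg (hnn t ht), hmono,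
    fun t ht => (mul_pos (NNReal.coe_pos.2 (hδ 0)) ((hH 0).pos t ht)).trans_le
      (hzero_le t ht.le), ?_, ?_, ?_⟩
  · simpa using hbound w fun k => le_self_add.trans le_self_add
  · refine tendsto_atTop_mono' atTop ?_ ((hH 0).tendsto_atTop.const_mul_atTop (hδ 0))
    filter_upwards [eventually_ge_atTop 0] with t ht using hzero_le t ht
  · refine (AEMeasurable.div ?_ (measurable_id.pow_const 2).aemeasurable).aestronglyMeasurable
    exact aemeasurable_restrict_of_monotoneOn measurableSet_Ioc fun s hs t _ hst =>
      hmono hs.1.le hst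
  · have hmeas : ∀ k, AEMeasurable (fun t => ENNReal.ofReal (H k t / t ^ 2))
        (volume.restrict (Ioc (0 : ℝ) 1)) := fun k =>
      (hH k).integrable.1.aemeasurable.ennreal_ofReal
    calc ∫⁻ t in Ioc (0 : ℝ) 1, ‖(∑' k, (δ k : ℝ) * H k t) / t ^ 2‖ₑ
        = ∫⁻ t in Ioc (0 : ℝ) 1, ∑' k, (δ k : ℝ≥0∞) * ENNReal.ofReal (H k t / t ^ 2) := by
          refine setLIntegral_congr_fun measurableSet_Ioc fun t ht => ?_
          have hdiv : ∀ k, 0 ≤ (δ k : ℝ) * H k t / t ^ 2 := fun k =>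
            div_nonneg (hnn t ht.1.le k) (sq_nonneg t)
          rw [← tsum_div_const, Real.enorm_of_nonneg (tsum_nonneg hdiv),
            ENNReal.ofReal_tsum_of_nonneg hdiv ((hsummable t ht.1.le).div_const _)]
          refine tsum_congr fun k => ?_
          rw [mul_div_assoc, ENNReal.ofReal_mul (δ k).coe_nonneg, ENNReal.ofReal_coe_nnreal]
      _ = ∑' k, (δ k : ℝ≥0∞) * I k := by
          rw [lintegral_tsum fun k => (hmeas k).const_mul _]
          exact tsum_congr fun k => lintegral_const_mul'' _ (hmeas k)
      _ < ⊤ := hbound I fun k => le_add_self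

/-- If a combination of measures charges a square more than the same combination of scale
functions allows, then the square is heavy for one of the measures. -/
lemma exists_isHeavy_of_isHeavy_sum {μs : ℕ → Measure ℂ} {H : ℕ → ℝ → ℝ} {c : ℕ → ℝ}
    (hH : ∀ k, IsScaleFunction (H k)) (hc : ∀ k, 0 < c k)
    (hsum : ∀ t, 0 ≤ t → Summable fun k => c k * H k t) {k m n : ℤ}
    (hQ : IsHeavy (Measure.sum fun j => ENNReal.ofReal (c j) • μs j)
      (fun t => ∑' j, c j * H j t) k m n) :
    ∃ j, IsHeavy (μs j) (H j) k m n := by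
  by_contra! hlight
  have ht : (0 : ℝ) ≤ 2 ^ (-k) := by positivity
  refine hQ.not_ge ?_
  rw [Measure.sum_apply_of_countable, ENNReal.ofReal_tsum_of_nonneg
    (fun j => mul_nonneg (hc j).le ((hH j).nonneg _ ht)) (hsum _ ht)]
  refine ENNReal.tsum_le_tsum fun j => ?_
  rw [ENNReal.ofReal_mul (hc j).le, Measure.smul_apply, smul_eq_mul]
  gcongr
  exact not_lt.1 (hlight j)

lemma tendsto_tsum_of_dominated {ι : Type*} {l : Filter ι} [l.IsCountablyGenerated]
    {f : ι → ℕ → ℝ≥0∞} {g bound : ℕ → ℝ≥0∞} (hbound : ∑' k, bound k ≠ ⊤)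
    (hle : ∀ i k, f i k ≤ bound k) (hlim : ∀ k, Tendsto (fun i => f i k) l (𝓝 (g k))) :
    Tendsto (fun i => ∑' k, f i k) l (𝓝 (∑' k, g k)) := by
  simp only [← lintegral_count]
  refine tendsto_lintegral_filter_of_dominated_convergence bound
    (Eventually.of_forall fun _ => measurable_of_countable _)
    (Eventually.of_forall fun i => Eventually.of_forall (hle i)) ?_
    (Eventually.of_forall hlim)
  rwa [lintegral_count]

theorem sum_of_dissectible_measures
    (μs : ℕ → Measure ℂ) (hfin : ∀ k, IsFiniteMeasure (μs k))
    (hs : ℕ → ℝ → ℝ) (hscale : ∀ k, IsScaleFunction (hs k))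
    (hdiss : ∀ k, HDissectible (μs k) (hs k))
    (hbdd : Bornology.IsBounded (⋃ k, msupport (μs k))) :
    ∃ c : ℕ → ℝ, (∀ k, 0 < c k) ∧
      ∃ h : ℝ → ℝ, IsScaleFunction h ∧
        (Measure.sum fun k => ENNReal.ofReal (c k) • μs k) univ < ⊤ ∧
        HDissectible (Measure.sum fun k => ENNReal.ofReal (c k) • μs k) h := by
  obtain ⟨ε, hε, hεsum⟩ := ENNReal.exists_pos_sum_of_countable' one_ne_zero ℕ
  have hcut : ∀ k, ∃ s : ℝ, 0 < s ∧ dyadicContent (Gset (μs k) (hs k) s) < ε k := fun k =>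
    (eventually_mem_nhdsWithin.and ((hdiss k).eventually_lt_const (hε k))).exists
  choose s hs_pos hs_lt using hcut
  set H : ℕ → ℝ → ℝ := fun k t =>
    hs k t + (Ioi (s k)).indicator (fun _ => (μs k univ).toReal) t with hH_def
  have hH : ∀ k, IsScaleFunction (H k) := fun k =>
    (hscale k).add_step ENNReal.toReal_nonneg (hs_pos k)
  obtain ⟨c, hc, hfinite, hsummable, hh⟩ :=
    exists_isScaleFunction_tsum hH fun k => measure_ne_top (μs k) univ
  refine ⟨c, hc, _, hh, ?_, ?_⟩
  · simpa [Measure.sum_apply_of_countable] using hfinite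
  have hheavy : ∀ j k m n, IsHeavy (μs j) (H j) k m n →
      IsHeavy (μs j) (hs j) k m n ∧ (2 : ℝ) ^ (-k) ≤ s j := by
    intro j k m n hQ
    have hle : (2 : ℝ) ^ (-k) ≤ s j := by
      by_contra! hlt
      refine hQ.not_ge ((measure_mono (subset_univ _)).trans ?_)
      rw [← ENNReal.ofReal_toReal (measure_ne_top (μs j) univ)]
      refine ENNReal.ofReal_le_ofReal ?_
      rw [hH_def]
      simp only
      rw [indicator_of_mem (mem_Ioi.2 hlt)]
      exact le_add_of_nonneg_left ((hscale j).nonneg _ (by positivity))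
    refine ⟨?_, hle⟩
    simpa only [IsHeavy, hH_def, indicator_of_notMem (notMem_Ioi.2 hle), add_zero] using hQ
  have hsub : ∀ r, Gset (Measure.sum fun k => ENNReal.ofReal (c k) • μs k)
      (fun t => ∑' k, c k * H k t) r ⊆ ⋃ j, Gset (μs j) (hs j) (min r (s j)) := by
    refine fun r => iUnion₂_subset fun p hp => ?_
    obtain ⟨j, hj⟩ := exists_isHeavy_of_isHeavy_sum hH hc hsummable hp.1
    obtain ⟨hj', hle⟩ := hheavy j _ _ _ hj
    exact subset_iUnion_of_subset j (subset_iUnion₂_of_subset p ⟨hj', le_min hp.2 hle⟩ Subset.rfl)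
  have hlim : Tendsto (fun r => ∑' j, dyadicContent (Gset (μs j) (hs j) (min r (s j))))
      (𝓝[>] (0 : ℝ)) (𝓝 (∑' _ : ℕ, 0)) := by
    refine tendsto_tsum_of_dominated (bound := ε) (hεsum.trans ENNReal.one_lt_top).ne
      (fun r j => (dyadicContent_mono (Gset_mono_right _ _ (min_le_right _ _))).trans
        (hs_lt j).le) fun j => ?_
    exact tendsto_of_tendsto_of_tendsto_of_le_of_le tendsto_const_nhds (hdiss j)
      (fun _ => zero_le)
      fun r => dyadicContent_mono (Gset_mono_right _ _ (min_le_left _ _))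
  rw [tsum_zero] at hlim
  exact tendsto_of_tendsto_of_tendsto_of_le_of_le tendsto_const_nhds hlim (fun _ => zero_le)
    fun r => (dyadicContent_mono (hsub r)).trans (dyadicContent_iUnion_le _)

end
end

section
/- Let ν be a finite positive Borel measure on ℂ with compact support that is h-dissectible for some scale function h. Then for Lebesgue-almost every x₀ ∈ ℝ there exist s > 0, a strictly increasing sequence (xₙ⁻) converging to x₀, and a strictly decreasing sequence (xₙ⁺) converging to x₀, such that x₀ and all the points xₙ⁻, xₙ⁺ belong to ℝ∖Re(G_s(ν)), where Re(E) = {Re z : z ∈ E}. The analogous statement holds with Im in place of Re. -/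
open MeasureTheory Filter Topology Metric Set Complex
open scoped ENNReal NNReal BigOperators

noncomputable section

/-- The points of a set of reals that fail to be two-sided monotone limits of the set are
countably many, hence negligible. -/
theorem ae_mem_imp_exists_seq_strictMono_strictAnti (A : Set ℝ) :
    ∀ᵐ x ∂(volume : Measure ℝ), x ∈ A → ∃ xm xp : ℕ → ℝ,
      StrictMono xm ∧ StrictAnti xp ∧ Tendsto xm atTop (𝓝 x) ∧ Tendsto xp atTop (𝓝 x) ∧
      ∀ n, xm n ∈ A ∧ xp n ∈ A := by
  have hright : {x ∈ A | 𝓝[A ∩ Ioi x] x = ⊥}.Countable :=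
    countable_setOfPred_isolated_right_within
  have hleft : {x ∈ A | 𝓝[A ∩ Iio x] x = ⊥}.Countable :=
    countable_setOfPred_isolated_left_within
  filter_upwards [hright.ae_notMem volume, hleft.ae_notMem volume] with x hxr hxl hxA
  have hcr : x ∈ closure (A ∩ Ioi x) :=
    mem_closure_iff_nhdsWithin_neBot.2 ⟨fun hbot => hxr ⟨hxA, hbot⟩⟩
  have hcl : x ∈ closure (A ∩ Iio x) :=
    mem_closure_iff_nhdsWithin_neBot.2 ⟨fun hbot => hxl ⟨hxA, hbot⟩⟩
  obtain ⟨xp, hp, -, hpt, hpA⟩ :=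
    (isGLB_of_mem_closure (fun _ hy => (mem_Ioi.1 hy.2).le)
      hcr).exists_seq_strictAnti_tendsto_of_notMem (fun hx => lt_irrefl x hx.2)
      (closure_nonempty_iff.1 ⟨x, hcr⟩)
  obtain ⟨xm, hm, -, hmt, hmA⟩ :=
    (isLUB_of_mem_closure (fun _ hy => (mem_Iio.1 hy.2).le)
      hcl).exists_seq_strictMono_tendsto_of_notMem (fun hx => lt_irrefl x hx.2)
      (closure_nonempty_iff.1 ⟨x, hcl⟩)
  exact ⟨xm, xp, hm, hp, hmt, hpt, fun n => ⟨(hmA n).1, (hpA n).1⟩⟩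

/-- A map sending dyadic squares to sets of Lebesgue measure at most their side length is
a contraction from dyadic content to Lebesgue measure. -/
theorem volume_image_le_dyadicContent {p : ℂ → ℝ}
    (hp : ∀ k m n : ℤ, volume (p '' dyadicSquare k m n) ≤ ENNReal.ofReal ((2 : ℝ) ^ (-k)))
    (E : Set ℂ) : volume (p '' E) ≤ dyadicContent E := by
  refine le_iInf₂ fun c hc => ?_
  calc volume (p '' E)
      ≤ volume (⋃ i, p '' dyadicSquare (c i).1 (c i).2.1 (c i).2.2) :=
        measure_mono ((image_mono hc).trans image_iUnion.subset)
    _ ≤ ∑' i, volume (p '' dyadicSquare (c i).1 (c i).2.1 (c i).2.2) := measure_iUnion_le _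
    _ ≤ ∑' i, ENNReal.ofReal ((2 : ℝ) ^ (-(c i).1)) := ENNReal.tsum_le_tsum fun i => hp _ _ _

theorem volume_re_image_dyadicSquare_le (k m n : ℤ) :
    volume (Complex.re '' dyadicSquare k m n) ≤ ENNReal.ofReal ((2 : ℝ) ^ (-k)) := by
  have hsub : Complex.re '' dyadicSquare k m n ⊆
      Ico ((m : ℝ) * 2 ^ (-k)) (((m : ℝ) + 1) * 2 ^ (-k)) := by
    rintro _ ⟨z, hz, rfl⟩
    exact ⟨hz.1, hz.2.1⟩
  refine (measure_mono hsub).trans_eq ?_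
  rw [Real.volume_Ico]
  congr 1
  ring

theorem volume_im_image_dyadicSquare_le (k m n : ℤ) :
    volume (Complex.im '' dyadicSquare k m n) ≤ ENNReal.ofReal ((2 : ℝ) ^ (-k)) := by
  have hsub : Complex.im '' dyadicSquare k m n ⊆
      Ico ((n : ℝ) * 2 ^ (-k)) (((n : ℝ) + 1) * 2 ^ (-k)) := by
    rintro _ ⟨z, hz, rfl⟩
    exact ⟨hz.2.2.1, hz.2.2.2⟩
  refine (measure_mono hsub).trans_eq ?_
  rw [Real.volume_Ico]
  congr 1
  ring

theorem HDissectible.ae_approximable_outside_image {ν : Measure ℂ} {h : ℝ → ℝ}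
    (hdiss : HDissectible ν h) {p : ℂ → ℝ}
    (hp : ∀ k m n : ℤ, volume (p '' dyadicSquare k m n) ≤ ENNReal.ofReal ((2 : ℝ) ^ (-k))) :
    ∀ᵐ x₀ ∂(volume : Measure ℝ), ∃ s > (0 : ℝ), ∃ xm xp : ℕ → ℝ,
      StrictMono xm ∧ StrictAnti xp ∧
      Tendsto xm atTop (𝓝 x₀) ∧ Tendsto xp atTop (𝓝 x₀) ∧
      x₀ ∉ p '' Gset ν h s ∧
      ∀ n, xm n ∉ p '' Gset ν h s ∧ xp n ∉ p '' Gset ν h s := by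
  obtain ⟨s, -, hs_pos, hs_lim⟩ := exists_seq_strictAnti_tendsto (0 : ℝ)
  have hlim : Tendsto (fun n => dyadicContent (Gset ν h (s n))) atTop (𝓝 0) :=
    hdiss.comp (tendsto_nhdsWithin_iff.2 ⟨hs_lim, Eventually.of_forall hs_pos⟩)
  have hnull : volume (⋂ n, p '' Gset ν h (s n)) = 0 :=
    le_antisymm (ge_of_tendsto' hlim fun n =>
      (measure_mono (iInter_subset _ n)).trans (volume_image_le_dyadicContent hp _)) zero_le
  have hseq := ae_all_iff.2 fun n =>
    ae_mem_imp_exists_seq_strictMono_strictAnti (p '' Gset ν h (s n))ᶜ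
  filter_upwards [measure_eq_zero_iff_ae_notMem.1 hnull, hseq] with x hx hxseq
  obtain ⟨n, hn⟩ : ∃ n, x ∉ p '' Gset ν h (s n) := by
    simpa only [mem_iInter, not_forall] using hx
  obtain ⟨xm, xp, hm, hp', hmt, hpt, hA⟩ := hxseq n hn
  exact ⟨s n, hs_pos n, xm, xp, hm, hp', hmt, hpt, hn, hA⟩

theorem ae_approximable_outside_projections
    (ν : Measure ℂ) [IsFiniteMeasure ν] (hsupp : ∃ K : Set ℂ, IsCompact K ∧ ν Kᶜ = 0)
    (h : ℝ → ℝ) (hscale : IsScaleFunction h) (hdiss : HDissectible ν h) :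
    (∀ᵐ x₀ ∂(volume : Measure ℝ), ∃ s > (0 : ℝ), ∃ xm xp : ℕ → ℝ,
      StrictMono xm ∧ StrictAnti xp ∧
      Tendsto xm atTop (𝓝 x₀) ∧ Tendsto xp atTop (𝓝 x₀) ∧
      x₀ ∉ Complex.re '' Gset ν h s ∧
      ∀ n, xm n ∉ Complex.re '' Gset ν h s ∧ xp n ∉ Complex.re '' Gset ν h s) ∧
    (∀ᵐ y₀ ∂(volume : Measure ℝ), ∃ s > (0 : ℝ), ∃ ym yp : ℕ → ℝ,
      StrictMono ym ∧ StrictAnti yp ∧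
      Tendsto ym atTop (𝓝 y₀) ∧ Tendsto yp atTop (𝓝 y₀) ∧
      y₀ ∉ Complex.im '' Gset ν h s ∧
      ∀ n, ym n ∉ Complex.im '' Gset ν h s ∧ yp n ∉ Complex.im '' Gset ν h s) :=
  ⟨hdiss.ae_approximable_outside_image volume_re_image_dyadicSquare_le,
    hdiss.ae_approximable_outside_image volume_im_image_dyadicSquare_le⟩

end
end

section
/- Let ν be a finite positive Borel measure on ℂ and h a scale function. Then for every s > 0 there is a constant M such that ν(B(z,r)) ≤ M·r for every z ∈ ℂ∖G_s(ν) and every r > 0, where B(z,r) denotes the open disc of radius r centered at z; that is, the Carleson constant of the set ℂ∖G_s(ν) with respect to ν is finite. -/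
open MeasureTheory Filter Topology Metric Set Complex
open scoped ENNReal NNReal BigOperators

noncomputable section

/-- A scale function grows at most linearly near the origin. -/
theorem IsScaleFunction.exists_le_mul {h : ℝ → ℝ} (hscale : IsScaleFunction h) :
    ∃ C : ℝ, 0 ≤ C ∧ ∀ t : ℝ, 0 < t → t ≤ 1 / 2 → h t ≤ C * t := by
  have hnn : ∀ u ∈ Ioc (0 : ℝ) 1, 0 ≤ h u / u ^ 2 := fun u hu =>
    div_nonneg (hscale.nonneg u hu.1.le) (sq_nonneg u)
  refine ⟨4 * ∫ u in Ioc (0 : ℝ) 1, h u / u ^ 2,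
    mul_nonneg (by norm_num) (setIntegral_nonneg measurableSet_Ioc hnn), fun t ht ht2 => ?_⟩
  have hsub : Ioc t (2 * t) ⊆ Ioc (0 : ℝ) 1 := fun u hu =>
    ⟨ht.trans hu.1, hu.2.trans (by linarith)⟩
  have hle : ∫ _ in Ioc t (2 * t), h t / (2 * t) ^ 2 ≤ ∫ u in Ioc t (2 * t), h u / u ^ 2 := by
    refine setIntegral_mono_on (by simp) (hscale.integrable.mono_set hsub)
      measurableSet_Ioc fun u hu => ?_
    have hu0 : 0 < u := ht.trans hu.1
    exact div_le_div₀ (hscale.nonneg u hu0.le) (hscale.mono ht.le hu.1.le) (by positivity)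
      (pow_le_pow_left₀ hu0.le hu.2 2)
  have hmono : ∫ u in Ioc t (2 * t), h u / u ^ 2 ≤ ∫ u in Ioc (0 : ℝ) 1, h u / u ^ 2 :=
    setIntegral_mono_set hscale.integrable
      ((ae_restrict_iff' measurableSet_Ioc).2 (Eventually.of_forall hnn)) hsub.eventuallyLE
  have hconst : ∫ _ in Ioc t (2 * t), h t / (2 * t) ^ 2 = h t / (4 * t) := by
    rw [setIntegral_const, Real.volume_real_Ioc_of_le (by linarith), smul_eq_mul]
    field_simp
    ring
  have := hconst ▸ hle.trans hmono
  rw [div_le_iff₀ (by positivity)] at this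
  linarith

/-- If `r ≤ 2⁻ᵏ`, the disc `B(z,r)` is covered by the dyadic square of side `2⁻ᵏ` containing `z`
and its eight neighbours. -/
theorem ball_subset_iUnion_dyadicSquare {z : ℂ} {r : ℝ} {k : ℤ} (hr : r ≤ (2 : ℝ) ^ (-k)) :
    ball z r ⊆ ⋃ p ∈ Finset.Icc (-1 : ℤ) 1 ×ˢ Finset.Icc (-1 : ℤ) 1,
      dyadicSquare k (⌊z.re / 2 ^ (-k)⌋ + p.1) (⌊z.im / 2 ^ (-k)⌋ + p.2) := by
  intro w hw
  have hd : (0 : ℝ) < 2 ^ (-k) := by positivity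
  have key : ∀ x y : ℝ, |y - x| < 2 ^ (-k) →
      ⌊y / 2 ^ (-k)⌋ - ⌊x / 2 ^ (-k)⌋ ∈ Finset.Icc (-1 : ℤ) 1 := by
    intro x y hxy
    have hq : |y / 2 ^ (-k) - x / 2 ^ (-k)| < 1 := by
      rw [← sub_div, abs_div, abs_of_pos hd, div_lt_one hd]
      exact hxy
    rw [abs_lt] at hq
    have hx := Int.floor_le (x / 2 ^ (-k))
    have hx' := Int.lt_floor_add_one (x / 2 ^ (-k))
    have hy := Int.floor_le (y / 2 ^ (-k))
    have hy' := Int.lt_floor_add_one (y / 2 ^ (-k))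
    have h1 : ⌊y / 2 ^ (-k)⌋ < ⌊x / 2 ^ (-k)⌋ + 2 := by
      rify
      linarith
    have h2 : ⌊x / 2 ^ (-k)⌋ < ⌊y / 2 ^ (-k)⌋ + 2 := by
      rify
      linarith
    rw [Finset.mem_Icc]
    omega
  have hwz : ‖w - z‖ < 2 ^ (-k) := (mem_ball_iff_norm.1 hw).trans_le hr
  have hre := key z.re w.re ((by simpa using abs_re_le_norm (w - z) : _ ≤ ‖w - z‖).trans_lt hwz)
  have him := key z.im w.im ((by simpa using abs_im_le_norm (w - z) : _ ≤ ‖w - z‖).trans_lt hwz)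
  refine mem_iUnion₂.2 ⟨(⌊w.re / 2 ^ (-k)⌋ - ⌊z.re / 2 ^ (-k)⌋,
    ⌊w.im / 2 ^ (-k)⌋ - ⌊z.im / 2 ^ (-k)⌋), Finset.mem_product.2 ⟨hre, him⟩, ?_⟩
  simp only [add_sub_cancel]
  exact ⟨(le_div_iff₀ hd).1 (Int.floor_le _), (div_lt_iff₀ hd).1 (Int.lt_floor_add_one _),
    (le_div_iff₀ hd).1 (Int.floor_le _), (div_lt_iff₀ hd).1 (Int.lt_floor_add_one _)⟩

/-- A point lies in the dilation `10Q°` of each of the nine dyadic squares around it. -/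
theorem mem_dilatedSquare_of_mem_Icc (z : ℂ) (k : ℤ) {i j : ℤ} (hi : i ∈ Finset.Icc (-1 : ℤ) 1)
    (hj : j ∈ Finset.Icc (-1 : ℤ) 1) :
    z ∈ dilatedSquare k (⌊z.re / 2 ^ (-k)⌋ + i) (⌊z.im / 2 ^ (-k)⌋ + j) := by
  have hd : (0 : ℝ) < 2 ^ (-k) := by positivity
  have key : ∀ (x : ℝ) (i : ℤ), i ∈ Finset.Icc (-1 : ℤ) 1 →
      |x - (((⌊x / 2 ^ (-k)⌋ + i : ℤ) : ℝ) + 1 / 2) * 2 ^ (-k)| < 5 * 2 ^ (-k) := by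
    intro x i hi
    rw [Finset.mem_Icc] at hi
    have hi1 : (-1 : ℝ) ≤ i := by exact_mod_cast hi.1
    have hi2 : (i : ℝ) ≤ 1 := by exact_mod_cast hi.2
    have hx := (le_div_iff₀ hd).1 (Int.floor_le (x / 2 ^ (-k)))
    have hx' := (div_lt_iff₀ hd).1 (Int.lt_floor_add_one (x / 2 ^ (-k)))
    have h1 := mul_le_mul_of_nonneg_right hi1 hd.le
    have h2 := mul_le_mul_of_nonneg_right hi2 hd.le
    push_cast
    rw [abs_lt]
    constructor <;> linarith
  exact ⟨key z.re i hi, key z.im j hj⟩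

/-- Off `G_s(ν)`, a disc of radius at most `2⁻ᵏ ≤ s` has mass at most `9 h(2⁻ᵏ)`. -/
theorem measure_ball_le_of_notMem_Gset {ν : Measure ℂ} {h : ℝ → ℝ} {s r : ℝ} {z : ℂ} {k : ℤ}
    (hz : z ∉ Gset ν h s) (hr : r ≤ (2 : ℝ) ^ (-k)) (hk : (2 : ℝ) ^ (-k) ≤ s) :
    ν (ball z r) ≤ 9 * ENNReal.ofReal (h (2 ^ (-k))) := by
  calc ν (ball z r)
      ≤ ∑ p ∈ Finset.Icc (-1 : ℤ) 1 ×ˢ Finset.Icc (-1 : ℤ) 1,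
          ν (dyadicSquare k (⌊z.re / 2 ^ (-k)⌋ + p.1) (⌊z.im / 2 ^ (-k)⌋ + p.2)) :=
        (measure_mono (ball_subset_iUnion_dyadicSquare hr)).trans (measure_biUnion_finset_le _ _)
    _ ≤ ∑ p ∈ Finset.Icc (-1 : ℤ) 1 ×ˢ Finset.Icc (-1 : ℤ) 1,
          ENNReal.ofReal (h (2 ^ (-k))) := by
        refine Finset.sum_le_sum fun p hp => not_lt.1 fun hheavy => hz ?_
        rw [Finset.mem_product] at hp
        exact mem_iUnion₂.2 ⟨(k, _, _), ⟨hheavy, hk⟩, mem_dilatedSquare_of_mem_Icc z k hp.1 hp.2⟩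
    _ = 9 * ENNReal.ofReal (h (2 ^ (-k))) := by
        simp [Finset.sum_const]

theorem carleson_constant_finite_outside_Gset
    (ν : Measure ℂ) [IsFiniteMeasure ν]
    (h : ℝ → ℝ) (hscale : IsScaleFunction h) (s : ℝ) (hs : 0 < s) :
    ∃ M : ℝ, ∀ z ∉ Gset ν h s, ∀ r > (0 : ℝ), (ν (ball z r)).toReal ≤ M * r := by
  obtain ⟨C, hC, hCle⟩ := hscale.exists_le_mul
  set ρ : ℝ := min s (1 / 2) / 2 with hρ
  have hρ0 : 0 < ρ := by positivity
  refine ⟨18 * C + ν.real univ / ρ, fun z hz r hr => ?_⟩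
  have hmass : 0 ≤ ν.real univ / ρ := by positivity
  rw [add_mul]
  rcases le_or_gt r ρ with hrρ | hrρ
  · obtain ⟨n, hn, hn'⟩ := exists_mem_Ioc_zpow hr (one_lt_two (α := ℝ))
    obtain ⟨k, hk⟩ : ∃ k : ℤ, n + 1 = -k := ⟨-(n + 1), by ring⟩
    have hk2 : (2 : ℝ) ^ (-k) < 2 * r := by
      rw [← hk, zpow_add_one₀ two_ne_zero]
      linarith
    rw [hk] at hn'
    have hmin : (2 : ℝ) ^ (-k) ≤ min s (1 / 2) := by linarith
    have hball := ENNReal.toReal_mono (by finiteness)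
      (measure_ball_le_of_notMem_Gset hz hn' (hmin.trans (min_le_left _ _)))
    have hpos : (0 : ℝ) < 2 ^ (-k) := by positivity
    rw [ENNReal.toReal_mul, ENNReal.toReal_ofNat,
      ENNReal.toReal_ofReal (hscale.nonneg _ hpos.le)] at hball
    have hlin := hCle _ hpos (hmin.trans (min_le_right _ _))
    have := mul_le_mul_of_nonneg_left hk2.le hC
    have := mul_nonneg hmass hr.le
    linarith
  · have h1 : ν.real (ball z r) ≤ ν.real univ := measureReal_mono (subset_univ _)
    have h2 : ν.real univ ≤ ν.real univ / ρ * r := by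
      rw [div_mul_eq_mul_div, le_div_iff₀ hρ0]
      exact mul_le_mul_of_nonneg_left hrρ.le measureReal_nonneg
    have := mul_nonneg hC hr.le
    change ν.real (ball z r) ≤ _
    linarith

end
end

section
/- Let ν be a finite positive Borel measure on ℂ, h a scale function, and s > 0. If E ⊆ ℂ∖G_s(ν) is a Borel set with finite one-dimensional Hausdorff measure, then ν(E) = 0. In particular, ν(γ) = 0 for every rectifiable Jordan curve γ that is disjoint from G_s(ν). -/
open MeasureTheory Filter Topology Metric Set Complex
open scoped ENNReal NNReal BigOperators

noncomputable section

/-- A scale function is `o(t)` at `0`. -/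
theorem IsScaleFunction.exists_forall_le_mul {h : ℝ → ℝ} (hscale : IsScaleFunction h)
    {δ : ℝ} (hδ : 0 < δ) : ∃ r > 0, ∀ t, 0 < t → t < r → h t ≤ δ * t := by
  have hfin : ∫⁻ t, ENNReal.ofReal (h t / t ^ 2) ∂(volume.restrict (Ioc (0 : ℝ) 1)) ≠ ⊤ :=
    hscale.integrable.lintegral_lt_top.ne
  obtain ⟨η, hη, hsmall⟩ := exists_pos_setLIntegral_lt_of_measure_lt hfin
    (ε := ENNReal.ofReal (δ / 4)) (by simpa using hδ)
  obtain ⟨η', -, hη0, hη'⟩ := ENNReal.lt_iff_exists_real_btwn.1 hη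
  rw [ENNReal.ofReal_pos] at hη0
  refine ⟨min (1 / 2) η', by positivity, fun t ht htr => ?_⟩
  have ht1 : t < 1 / 2 := htr.trans_le (min_le_left _ _)
  have ht2 : t < η' := htr.trans_le (min_le_right _ _)
  have hsub : Ioc t (2 * t) ⊆ Ioc (0 : ℝ) 1 := Ioc_subset_Ioc ht.le (by linarith)
  have hint := hsmall (Ioc t (2 * t)) <| by
    refine (Measure.restrict_apply_le _ _).trans_lt ?_
    rw [Real.volume_Ioc]
    exact (ENNReal.ofReal_le_ofReal (by linarith)).trans_lt hη'
  rw [Measure.restrict_restrict measurableSet_Ioc, inter_eq_left.2 hsub] at hint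
  have hlower : ENNReal.ofReal (h t / (4 * t)) ≤
      ∫⁻ u in Ioc t (2 * t), ENNReal.ofReal (h u / u ^ 2) := by
    have hval : ∫⁻ _ in Ioc t (2 * t), ENNReal.ofReal (h t / (2 * t) ^ 2) =
        ENNReal.ofReal (h t / (4 * t)) := by
      have := hscale.nonneg t ht.le
      rw [setLIntegral_const, Real.volume_Ioc, ← ENNReal.ofReal_mul (by positivity)]
      congr 1
      field_simp
      ring
    rw [← hval]
    refine setLIntegral_mono' measurableSet_Ioc fun u hu => ENNReal.ofReal_le_ofReal ?_
    have hu0 : 0 < u := ht.trans hu.1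
    exact div_le_div₀ (hscale.nonneg u hu0.le) (hscale.mono ht.le hu.1.le) (by positivity)
      (pow_le_pow_left₀ hu0.le hu.2 2)
  have hlt := (ENNReal.ofReal_lt_ofReal_iff (by positivity)).1 (hlower.trans_lt hint)
  rw [div_lt_iff₀ (by positivity)] at hlt
  linarith

/-- A point of a dyadic square lies in the dilates of the adjacent squares of the same
generation. -/
theorem mem_dilatedSquare_of_adjacent {k p q i j : ℤ} {z : ℂ} (hz : z ∈ dyadicSquare k p q)
    (hi : i ∈ Finset.Icc (p - 1) (p + 1)) (hj : j ∈ Finset.Icc (q - 1) (q + 1)) :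
    z ∈ dilatedSquare k i j := by
  obtain ⟨h1, h2, h3, h4⟩ := hz
  have ht : (0 : ℝ) < 2 ^ (-k) := by positivity
  rw [Finset.mem_Icc] at hi hj
  have hi1 : (p : ℝ) - 1 ≤ i := by exact_mod_cast hi.1
  have hi2 : (i : ℝ) ≤ p + 1 := by exact_mod_cast hi.2
  have hj1 : (q : ℝ) - 1 ≤ j := by exact_mod_cast hj.1
  have hj2 : (j : ℝ) ≤ q + 1 := by exact_mod_cast hj.2
  refine ⟨abs_lt.2 ⟨?_, ?_⟩, abs_lt.2 ⟨?_, ?_⟩⟩ <;> nlinarith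

/-- The dyadic square of generation `k` containing a given point. -/
theorem mem_dyadicSquare_floor (k : ℤ) (z : ℂ) :
    z ∈ dyadicSquare k ⌊z.re / 2 ^ (-k)⌋ ⌊z.im / 2 ^ (-k)⌋ := by
  have ht : (0 : ℝ) < 2 ^ (-k) := by positivity
  exact ⟨(le_div_iff₀ ht).1 (Int.floor_le _), (div_lt_iff₀ ht).1 (Int.lt_floor_add_one _),
    (le_div_iff₀ ht).1 (Int.floor_le _), (div_lt_iff₀ ht).1 (Int.lt_floor_add_one _)⟩

/-- Reals at distance at most `t` have floors of `x / t` differing by at most one. -/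
theorem floor_div_mem_Icc {t x y : ℝ} (ht : 0 < t) (hxy : |y - x| ≤ t) :
    ⌊y / t⌋ ∈ Finset.Icc (⌊x / t⌋ - 1) (⌊x / t⌋ + 1) := by
  obtain ⟨h1, h2⟩ := abs_le.1 hxy
  have hle : y / t ≤ x / t + 1 := by
    rw [div_add_one ht.ne']
    exact div_le_div_of_nonneg_right (by linarith) ht.le
  have hge : x / t - 1 ≤ y / t := by
    rw [div_sub_one ht.ne']
    exact div_le_div_of_nonneg_right (by linarith) ht.le
  rw [Finset.mem_Icc, ← Int.floor_sub_one, ← Int.floor_add_one]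
  exact ⟨Int.floor_le_floor hge, Int.floor_le_floor hle⟩

/-- A closed ball of radius at most `2⁻ᵏ ≤ s` centred off `G_s(ν)` is covered by nine light
squares of generation `k`. -/
theorem measure_closedBall_le_of_notMem_Gset {ν : Measure ℂ} {h : ℝ → ℝ} {s : ℝ} {z : ℂ}
    (hz : z ∉ Gset ν h s) {k : ℤ} (hk : (2 : ℝ) ^ (-k) ≤ s) {ρ : ℝ} (hρ : ρ ≤ 2 ^ (-k)) :
    ν (closedBall z ρ) ≤ 9 * ENNReal.ofReal (h (2 ^ (-k))) := by
  have ht : (0 : ℝ) < 2 ^ (-k) := by positivity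
  set p := ⌊z.re / 2 ^ (-k)⌋
  set q := ⌊z.im / 2 ^ (-k)⌋
  set I := Finset.Icc (p - 1) (p + 1) ×ˢ Finset.Icc (q - 1) (q + 1)
  have hcover : closedBall z ρ ⊆ ⋃ ij ∈ I, dyadicSquare k ij.1 ij.2 := by
    intro w hw
    have hd : ‖w - z‖ ≤ 2 ^ (-k) := (mem_closedBall_iff_norm.1 hw).trans hρ
    refine mem_biUnion (x := (⌊w.re / 2 ^ (-k)⌋, ⌊w.im / 2 ^ (-k)⌋)) ?_
      (mem_dyadicSquare_floor k w)
    refine Finset.mem_product.2 ⟨floor_div_mem_Icc ht ?_, floor_div_mem_Icc ht ?_⟩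
    · exact (abs_re_le_norm (w - z)).trans hd
    · exact (abs_im_le_norm (w - z)).trans hd
  have hlight : ∀ ij ∈ I, ν (dyadicSquare k ij.1 ij.2) ≤ ENNReal.ofReal (h (2 ^ (-k))) := by
    intro ij hij
    obtain ⟨hi, hj⟩ := Finset.mem_product.1 hij
    by_contra! hheavy
    exact hz (mem_iUnion₂.2 ⟨(k, ij.1, ij.2), ⟨hheavy, hk⟩,
      mem_dilatedSquare_of_adjacent (mem_dyadicSquare_floor k z) hi hj⟩)
  have hcard : I.card = 9 := by
    simp only [I, Finset.card_product, Int.card_Icc]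
    ring_nf
    rfl
  calc ν (closedBall z ρ) ≤ ν (⋃ ij ∈ I, dyadicSquare k ij.1 ij.2) := measure_mono hcover
    _ ≤ ∑ ij ∈ I, ν (dyadicSquare k ij.1 ij.2) := measure_biUnion_finset_le _ _
    _ ≤ I.card • ENNReal.ofReal (h (2 ^ (-k))) := Finset.sum_le_card_nsmul _ _ _ hlight
    _ = 9 * ENNReal.ofReal (h (2 ^ (-k))) := by rw [hcard, nsmul_eq_mul]; norm_num

/-- Off `G_s(ν)` the measure of a ball is, uniformly, of smaller order than its radius. -/
theorem exists_measure_closedBall_le {ν : Measure ℂ} {h : ℝ → ℝ} (hscale : IsScaleFunction h)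
    {s : ℝ} (hs : 0 < s) {ε : ℝ} (hε : 0 < ε) :
    ∃ r > 0, ∀ z ∉ Gset ν h s, ∀ ρ, 0 ≤ ρ → ρ < r →
      ν (closedBall z ρ) ≤ ENNReal.ofReal (ε * ρ) := by
  obtain ⟨r, hr, hsmall⟩ := hscale.exists_forall_le_mul (δ := ε / 18) (by positivity)
  refine ⟨min r s / 2, by positivity, fun z hz => ?_⟩
  have hpos : ∀ ρ, 0 < ρ → ρ < min r s / 2 → ν (closedBall z ρ) ≤ ENNReal.ofReal (ε * ρ) := by
    intro ρ hρ hρr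
    obtain ⟨n, hn1, hn2⟩ := exists_mem_Ioc_zpow hρ (one_lt_two : (1 : ℝ) < 2)
    rw [← neg_neg (n + 1)] at hn2
    have hupper : (2 : ℝ) ^ (-(-(n + 1))) < 2 * ρ := by
      rw [neg_neg, zpow_add_one₀ two_ne_zero]
      linarith
    have hts := hupper.trans_le (show 2 * ρ ≤ s by linarith [min_le_right r s])
    have htr := hupper.trans_le (show 2 * ρ ≤ r by linarith [min_le_left r s])
    refine (measure_closedBall_le_of_notMem_Gset hz hts.le hn2).trans ?_
    rw [← ENNReal.ofReal_ofNat, ← ENNReal.ofReal_mul (by norm_num)]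
    refine ENNReal.ofReal_le_ofReal ?_
    have := hsmall _ (by positivity) htr
    nlinarith
  intro ρ hρ hρr
  obtain rfl | hρ0 := hρ.eq_or_lt
  · have hlim : Tendsto (fun x : ℝ => ENNReal.ofReal (ε * x)) (𝓝[>] 0)
        (𝓝 (ENNReal.ofReal (ε * 0))) :=
      ENNReal.tendsto_ofReal (tendsto_const_nhds.mul (tendsto_id.mono_left nhdsWithin_le_nhds))
    refine ge_of_tendsto hlim ?_
    filter_upwards [Ioo_mem_nhdsGT hρr] with x hx
    exact (measure_mono (closedBall_subset_closedBall hx.1.le)).trans (hpos x hx.1 hx.2)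
  · exact hpos ρ hρ0 hρr

/-- Off `G_s(ν)`, the measure `ν` is dominated by any multiple of the length. -/
theorem measure_le_mul_hausdorffMeasure {ν : Measure ℂ} {h : ℝ → ℝ} (hscale : IsScaleFunction h)
    {s : ℝ} (hs : 0 < s) {E : Set ℂ} (hE : MeasurableSet E) (hEG : E ⊆ (Gset ν h s)ᶜ)
    {ε : ℝ} (hε : 0 < ε) : ν E ≤ ENNReal.ofReal ε * μH[1] E := by
  obtain ⟨r, hr, hball⟩ := exists_measure_closedBall_le (ν := ν) hscale hs hε
  have hε0 : ENNReal.ofReal ε ≠ 0 := by simpa using hε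
  have hle : (ENNReal.ofReal ε)⁻¹ • ν.restrict E ≤ μH[1] := by
    refine Measure.le_hausdorffMeasure 1 _ (ENNReal.ofReal (r / 2)) (by simpa using hr) ?_
    intro S hS
    rw [ENNReal.rpow_one, Measure.smul_apply, smul_eq_mul, Measure.restrict_apply' hE]
    obtain hempty | ⟨z, hzS, hzE⟩ := (S ∩ E).eq_empty_or_nonempty
    · simp [hempty]
    have hfin : ediam S ≠ ⊤ := (hS.trans_lt ENNReal.ofReal_lt_top).ne
    have hdiam : Metric.diam S < r :=
      (ENNReal.toReal_le_of_le_ofReal (by positivity) hS).trans_lt (by linarith)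
    have hsub : S ∩ E ⊆ closedBall z (Metric.diam S) := fun w hw =>
      dist_le_diam_of_mem' hfin hw.1 hzS
    have hν := (measure_mono hsub).trans (hball z (hEG hzE) _ diam_nonneg hdiam)
    rw [ENNReal.ofReal_mul hε.le, Metric.diam, ENNReal.ofReal_toReal hfin] at hν
    exact (ENNReal.inv_mul_le_iff hε0 ENNReal.ofReal_ne_top).2 hν
  have hEle := hle E
  rw [Measure.smul_apply, smul_eq_mul, Measure.restrict_apply_self] at hEle
  exact (ENNReal.inv_mul_le_iff hε0 ENNReal.ofReal_ne_top).1 hEle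

theorem null_of_finite_length_outside_Gset
    (ν : Measure ℂ) [IsFiniteMeasure ν]
    (h : ℝ → ℝ) (hscale : IsScaleFunction h) (s : ℝ) (hs : 0 < s) :
    (∀ E : Set ℂ, MeasurableSet E → E ⊆ (Gset ν h s)ᶜ → μH[1] E < ⊤ → ν E = 0) ∧
    (∀ γ : Set ℂ, IsJordanCurve γ → μH[1] γ < ⊤ → Disjoint γ (Gset ν h s) → ν γ = 0) := by
  have hnull : ∀ E : Set ℂ, MeasurableSet E → E ⊆ (Gset ν h s)ᶜ → μH[1] E < ⊤ → ν E = 0 := by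
    intro E hE hEG hfin
    have hlim : Tendsto (fun ε : ℝ => ENNReal.ofReal ε * μH[1] E) (𝓝[>] 0) (𝓝 0) := by
      have hzero := ENNReal.Tendsto.mul_const (b := μH[1] E)
        (ENNReal.tendsto_ofReal (tendsto_id.mono_left (nhdsWithin_le_nhds (a := (0 : ℝ)) (s := Ioi 0))))
        (Or.inr hfin.ne)
      simpa using hzero
    refine nonpos_iff_eq_zero.1 (ge_of_tendsto hlim ?_)
    filter_upwards [self_mem_nhdsWithin] with ε hε
    exact measure_le_mul_hausdorffMeasure hscale hs hE hEG hε
  refine ⟨hnull, fun γ hγ hfin hdisj => hnull γ ?_ hdisj.subset_compl_right hfin⟩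
  obtain ⟨f, hf, -, rfl⟩ := hγ
  exact (isCompact_range hf).measurableSet

end
end
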